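/- There exists an absolute constant c > 0 such that for all real numbers α ≥ β ≥ 2 and r ≥ s > −1 and all integers n ≥ (2α+r+1)² and m ≥ (α+β)², one has K_m^{(α,β)}(1) · ∫_{−1}^1 |p_n^{(α+r+1, β−1)}(x)/p_n^{(α+r+1, β−1)}(1)|² (1−x)^{s+α} (1+x)^β dx ≤ c · e^{2r−2s} · 2^s · (m/n)^{2α+2s+2} · m^{−2s} · (Γ(α+r+2)² / (Γ(α+1)Γ(α+2))) · (α+r+2)^{2s−2r−2/3}. -/

import Mathlib

noncomputable section

open MeasureTheory Real Set
open scoped RealInnerProductSpace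

/-- Value at `x` of the orthonormalized Jacobi polynomial `p_n^{(α,β)}`. -/
def jacobiP (α β : ℝ) (n : ℕ) (x : ℝ) : ℝ :=
  Real.sqrt ((2 * (n : ℝ) + α + β + 1) / 2 ^ (α + β + 1) *
      (Real.Gamma ((n : ℝ) + α + β + 1) * (n.factorial : ℝ) /
        (Real.Gamma ((n : ℝ) + α + 1) * Real.Gamma ((n : ℝ) + β + 1)))) *
    (Real.Gamma (α + n + 1) / ((n.factorial : ℝ) * Real.Gamma (α + β + n + 1))) *
    ∑ m ∈ Finset.range (n + 1),
      (n.choose m : ℝ) * (Real.Gamma (α + β + n + m + 1) / Real.Gamma (α + m + 1)) *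
        ((x - 1) / 2) ^ m

/-- The kernel `K_n^{(α,β)}(x) = Σ_{ℓ<n} p_ℓ^{(α,β)}(1) p_ℓ^{(α,β)}(x)`. -/
def jacobiK (α β : ℝ) (n : ℕ) (x : ℝ) : ℝ :=
  ∑ ℓ ∈ Finset.range n, jacobiP α β ℓ 1 * jacobiP α β ℓ x

/-- The unit sphere `S^d ⊂ ℝ^{d+1}`. -/
abbrev Sph (d : ℕ) := Metric.sphere (0 : EuclideanSpace ℝ (Fin (d + 1))) 1

/-- The rotation invariant Riemannian volume probability measure `μ_d^*` on `S^d`. -/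
def sphMeasure (d : ℕ) : Measure (Sph d) :=
  ((volume : Measure (EuclideanSpace ℝ (Fin (d + 1)))).toSphere Set.univ)⁻¹ •
    (volume : Measure (EuclideanSpace ℝ (Fin (d + 1)))).toSphere

/-- `f : S^d → ℝ` is the restriction to the sphere of an algebraic polynomial in `d+1`
variables of total degree `< n`, i.e. `f ∈ Π_n^d`. -/
def IsSphPoly (d : ℕ) (n : ℝ) (f : Sph d → ℝ) : Prop :=
  ∃ p : MvPolynomial (Fin (d + 1)) ℝ, (p.totalDegree : ℝ) < n ∧
    ∀ y : Sph d, f y = MvPolynomial.eval (fun i => (y : EuclideanSpace ℝ (Fin (d + 1))) i) p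

/-- Integral of `f` with respect to a signed measure (via the Jordan decomposition). -/
def sInt {X : Type*} [MeasurableSpace X] (ν : SignedMeasure X) (f : X → ℝ) : ℝ :=
  (∫ x, f x ∂ν.toJordanDecomposition.posPart) - ∫ x, f x ∂ν.toJordanDecomposition.negPart

/-- Integral of `f` over a set `s` with respect to a signed measure. -/
def sIntOn {X : Type*} [MeasurableSpace X] (ν : SignedMeasure X) (s : Set X) (f : X → ℝ) : ℝ :=
  (∫ x in s, f x ∂ν.toJordanDecomposition.posPart) -
    ∫ x in s, f x ∂ν.toJordanDecomposition.negPart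

/-- `ν` is a quadrature measure of order `n` on `S^d`. -/
def IsQuadrature (d : ℕ) (n : ℝ) (ν : SignedMeasure (Sph d)) : Prop :=
  ∀ f : Sph d → ℝ, IsSphPoly d n f → sInt ν f = ∫ y, f y ∂sphMeasure d

/-- `ν` satisfies the Marcinkiewicz-Zygmund inequality of order `n` with constant `c`;
`ν ∈ MZ(d;n)` means this holds for some `c`, and `|||ν|||_{d;n}` is the least such `c`. -/
def IsMZ (d : ℕ) (n : ℝ) (ν : SignedMeasure (Sph d)) (c : ℝ) : Prop :=
  ∀ f : Sph d → ℝ, IsSphPoly d (n / 2) f →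
    (∫ y, (f y) ^ 2 ∂ν.totalVariation) ≤ c * ∫ y, (f y) ^ 2 ∂sphMeasure d

/-- `ω_d`, the volume of `S^d`. -/
def omegaS (d : ℕ) : ℝ := 2 * Real.pi ^ (((d : ℝ) + 1) / 2) / Real.Gamma (((d : ℝ) + 1) / 2)

/-- The reproducing kernel `K_{d;n}` of `Π_n^d`. -/
def sphK (d n : ℕ) (x : ℝ) : ℝ :=
  (omegaS d / omegaS (d - 1)) * jacobiK ((d : ℝ) / 2 - 1) ((d : ℝ) / 2 - 1) n x

/-- The kernel `Φ̃_{d;n,r}`. -/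
def PhiTilde (d n : ℕ) (r : ℝ) (x : ℝ) : ℝ :=
  sphK d ((d + 2) * n) x *
    (jacobiP ((d : ℝ) / 2 + r) ((d : ℝ) / 2 - 2) (d * n) x /
      jacobiP ((d : ℝ) / 2 + r) ((d : ℝ) / 2 - 2) (d * n) 1)

/-- The kernel `Φ_{d;n,r}`. -/
def Phi (d n : ℕ) (r : ℝ) (x : ℝ) : ℝ := PhiTilde d n r x * ((1 + x) / 2) ^ n

/-- The inner product `x·y` of two points of `S^d`. -/
def ip {d : ℕ} (x y : Sph d) : ℝ :=
  ⟪(x : EuclideanSpace ℝ (Fin (d + 1))), (y : EuclideanSpace ℝ (Fin (d + 1)))⟫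

/-- The operator `σ_{d;n,r}(ν, f)`. -/
def sigmaOp (d n : ℕ) (r : ℝ) (ν : SignedMeasure (Sph d)) (f : Sph d → ℝ) (x : Sph d) : ℝ :=
  sInt ν (fun y => f y * Phi d n r (ip x y))

/-- The operator `σ̃_{d;n,r}(ν, f)`. -/
def sigmaTildeOp (d n : ℕ) (r : ℝ) (ν : SignedMeasure (Sph d)) (f : Sph d → ℝ) (x : Sph d) : ℝ :=
  sInt ν (fun y => f y * PhiTilde d n r (ip x y))

/-- The uniform (supremum) norm `‖f‖_∞`. -/
def supNorm {X : Type*} (f : X → ℝ) : ℝ := sSup (Set.range fun x => |f x|)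

/-- `E_{d;n}(f)`, the degree of approximation of `f` from `Π_n^d` in the uniform norm. -/
def bestApprox (d : ℕ) (n : ℝ) (f : Sph d → ℝ) : ℝ :=
  sInf {t | ∃ g, IsSphPoly d n g ∧ ∀ y, |f y - g y| ≤ t}

/-- `dim Π_n^d = (2n+d−2)·Γ(n+d−1)/(Γ(n)·Γ(d+1))` (for `n ≥ 2`). -/
def dimPi (d n : ℕ) : ℝ :=
  (2 * (n : ℝ) + d - 2) * Real.Gamma ((n : ℝ) + d - 1) /
    (Real.Gamma n * Real.Gamma ((d : ℝ) + 1))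

/-!
In the variable `t = (1 - x) / 2` the normalized Jacobi polynomial is a hypergeometric polynomial
`Y`, and `Y²` satisfies a third-order linear differential equation. Hence the moments
`N v = ∫₀¹ Y² t^(a-1-v) (1-t)^b dt` obey an exact three-term recurrence; dropping its term of
favourable sign bounds `N (u + 1) / N u`. Iterating over the integer part of `v` and interpolating
over the fractional part by weighted AM–GM reduces `N v` to `N 0`, which orthogonality evaluates in
terms of Gamma functions. The kernel at `1` telescopes to a closed form, and log-convexity of `Γ`
turns both closed forms into powers of `n` and `m`.
-/

lemma Gamma_add_natCast {x : ℝ} (hx : 0 < x) (k : ℕ) :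
    Gamma (x + k) = (ascPochhammer ℝ k).eval x * Gamma x := by
  induction k with
  | zero => simp
  | succ k ih =>
    have hxk : 0 < x + k := by positivity
    rw [Nat.cast_succ, ← add_assoc, Gamma_add_one hxk.ne', ih, ascPochhammer_succ_eval]
    ring

lemma Gamma_add_le_rpow_mul_Gamma {x a : ℝ} (hx : 0 < x) (ha : 0 < a) :
    Gamma (x + a) ≤ (x + a) ^ a * Gamma x := by
  have hxa : 0 < x + a := by positivity
  have hΓx := Gamma_pos_of_pos hx
  have hΓxa := Gamma_pos_of_pos hxa
  have slopes := convexOn_log_Gamma.slope_mono_adjacent (mem_Ioi.mpr hx)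
    (mem_Ioi.mpr (by positivity : 0 < x + a + 1)) (by linarith : x < x + a) (by linarith)
  simp only [Function.comp, Gamma_add_one hxa.ne', log_mul hxa.ne' hΓxa.ne',
    add_sub_cancel_left, add_sub_cancel_right, div_one] at slopes
  rw [div_le_iff₀ ha] at slopes
  rw [← log_le_log_iff hΓxa (by positivity), log_mul (by positivity) hΓx.ne', log_rpow hxa]
  linarith

lemma rpow_mul_Gamma_le_Gamma_add {x a : ℝ} (hx : 0 < x) (ha : 1 < a) :
    x ^ a * Gamma x ≤ Gamma (x + a) := by
  have hxa : 0 < x + a := by positivity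
  have hΓx := Gamma_pos_of_pos hx
  have slopes := convexOn_log_Gamma.slope_mono_adjacent (mem_Ioi.mpr hx)
    (mem_Ioi.mpr hxa) (by linarith : x < x + 1) (by linarith)
  simp only [Function.comp, Gamma_add_one hx.ne', log_mul hx.ne' hΓx.ne',
    add_sub_cancel_left, add_sub_cancel_right, div_one, add_sub_add_left_eq_sub] at slopes
  rw [le_div_iff₀ (by linarith)] at slopes
  rw [← log_le_log_iff (by positivity) (Gamma_pos_of_pos hxa), log_mul (by positivity) hΓx.ne',
    log_rpow hx]
  linarith

lemma Gamma_div_Gamma_add_le_rpow_neg {x y a : ℝ} (hy : 0 < y) (hyx : y ≤ x) (ha : 1 < a) :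
    Gamma x / Gamma (x + a) ≤ y ^ (-a) := by
  have hx : 0 < x := hy.trans_le hyx
  have := Gamma_pos_of_pos hx
  rw [rpow_neg hy.le, div_le_iff₀ (Gamma_pos_of_pos (by positivity)), inv_mul_eq_div,
    le_div_iff₀ (by positivity), mul_comm]
  calc y ^ a * Gamma x ≤ x ^ a * Gamma x := by gcongr
    _ ≤ Gamma (x + a) := rpow_mul_Gamma_le_Gamma_add hx ha

lemma add_rpow_le_exp_mul_rpow {x y p : ℝ} (hx : 0 < x) (hxy : 0 ≤ x + y) (hp : 0 ≤ p) :
    (x + y) ^ p ≤ exp (p * y / x) * x ^ p := by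
  have hbase : x + y ≤ exp (y / x) * x := by
    calc x + y = (y / x + 1) * x := by field_simp; ring
      _ ≤ exp (y / x) * x := by gcongr; exact add_one_le_exp _
  calc (x + y) ^ p ≤ (exp (y / x) * x) ^ p := by gcongr
    _ = exp (p * y / x) * x ^ p := by
      rw [mul_rpow (exp_pos _).le hx.le, ← exp_mul, div_mul_eq_mul_div, mul_comm y]

lemma div_rpow_add_mul_rpow_neg {x y : ℝ} (hx : 0 < x) (hy : 0 < y) (p q : ℝ) :
    (x / y) ^ (p + q) * x ^ (-q) = x ^ p * y ^ (-(p + q)) := by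
  rw [div_rpow hx.le hy.le, rpow_neg hy.le, div_mul_eq_mul_div, ← rpow_add hx,
    add_neg_cancel_right, div_eq_mul_inv]

lemma ofReal_rpow_mul_one_sub_rpow (a b : ℝ) {t : ℝ} (ht : t ∈ Icc (0 : ℝ) 1) :
    ((t ^ a * (1 - t) ^ b : ℝ) : ℂ) = (t : ℂ) ^ (a : ℂ) * (1 - (t : ℂ)) ^ (b : ℂ) := by
  rw [Complex.ofReal_mul, Complex.ofReal_cpow ht.1, Complex.ofReal_cpow (sub_nonneg.mpr ht.2)]
  push_cast
  rfl

lemma intervalIntegrable_rpow_mul_one_sub_rpow {a b : ℝ} (ha : -1 < a) (hb : -1 < b) :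
    IntervalIntegrable (fun t : ℝ => t ^ a * (1 - t) ^ b) volume 0 1 := by
  have hconv := Complex.betaIntegral_convergent (u := a + 1) (v := b + 1)
    (by simp; linarith) (by simp; linarith)
  have hre : IntervalIntegrable
      (fun t : ℝ => ((t : ℂ) ^ (a : ℂ) * (1 - (t : ℂ)) ^ (b : ℂ)).re) volume 0 1 := by
    simp only [add_sub_cancel_right] at hconv
    rw [intervalIntegrable_iff] at hconv ⊢
    exact hconv.re
  refine IntervalIntegrable.congr (fun t ht => ?_) hre
  rw [uIoc_of_le zero_le_one] at ht
  simp only [← ofReal_rpow_mul_one_sub_rpow a b (Ioc_subset_Icc_self ht), Complex.ofReal_re]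

lemma integral_rpow_mul_one_sub_rpow {a b : ℝ} (ha : 0 < a) (hb : 0 < b) :
    ∫ t in (0 : ℝ)..1, t ^ (a - 1) * (1 - t) ^ (b - 1) = Gamma a * Gamma b / Gamma (a + b) := by
  have hcomplex : ((∫ t in (0 : ℝ)..1, t ^ (a - 1) * (1 - t) ^ (b - 1) : ℝ) : ℂ) =
      Complex.betaIntegral a b := by
    rw [← intervalIntegral.integral_ofReal, Complex.betaIntegral]
    refine intervalIntegral.integral_congr fun t ht => ?_
    rw [uIcc_of_le zero_le_one] at ht
    simpa using ofReal_rpow_mul_one_sub_rpow (a - 1) (b - 1) ht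
  have hbeta := ProbabilityTheory.beta_eq_betaIntegralReal a b ha hb
  rwa [← hcomplex, Complex.ofReal_re, ProbabilityTheory.beta, eq_comm] at hbeta

lemma alternating_sum_choose_mul (n : ℕ) (f : ℝ → ℝ) (x : ℝ) :
    ∑ j ∈ Finset.range (n + 1), (-1 : ℝ) ^ j * n.choose j * f (x + j) =
      (-1) ^ n * ((fwdDiff (1 : ℝ))^[n] f) x := by
  rw [fwdDiff_iter_eq_sum_shift, Finset.mul_sum]
  refine Finset.sum_congr rfl fun j hj => ?_
  obtain ⟨k, rfl⟩ := Nat.exists_eq_add_of_le (Finset.mem_range_succ_iff.mp hj)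
  have hsign : (-1 : ℝ) ^ (j + k) * (-1) ^ k = (-1) ^ j := by
    rw [pow_add, mul_assoc, ← mul_pow]
    simp
  simp only [zsmul_eq_mul, nsmul_eq_mul, mul_one, Nat.add_sub_cancel_left]
  push_cast
  rw [← hsign]
  ring

lemma alternating_sum_choose_mul_eval_eq_zero {n : ℕ} {P : Polynomial ℝ} (hP : P.natDegree < n) :
    ∑ j ∈ Finset.range (n + 1), (-1 : ℝ) ^ j * n.choose j * P.eval (j : ℝ) = 0 := by
  have hsum := alternating_sum_choose_mul n P.eval 0
  simpa only [Polynomial.fwdDiff_iter_eq_zero_of_degree_lt hP, Pi.zero_apply, mul_zero,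
    zero_add] using hsum

lemma fwdDiff_iter_inv (n : ℕ) {x : ℝ} (hx : 0 < x) :
    ((fwdDiff (1 : ℝ))^[n] (·⁻¹)) x =
      (-1) ^ n * (n.factorial * Gamma x / Gamma (x + n + 1)) := by
  induction n generalizing x with
  | zero =>
    have := (Gamma_pos_of_pos hx).ne'
    rw [Nat.cast_zero, add_zero, Gamma_add_one hx.ne', Nat.factorial_zero, Nat.cast_one, pow_zero,
      one_mul, one_mul, mul_comm x, div_mul_cancel_left₀ this, Function.iterate_zero, id]
  | succ n ih =>
    have hxn : 0 < x + n + 1 := by positivity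
    have hΓ := (Gamma_pos_of_pos hxn).ne'
    rw [Function.iterate_succ_apply', fwdDiff, ih hx, ih (by linarith), Nat.factorial_succ,
      Nat.cast_succ, show x + 1 + (n : ℝ) + 1 = x + n + 1 + 1 by ring, ← add_assoc x,
      Gamma_add_one hxn.ne', Gamma_add_one hx.ne']
    push_cast
    field_simp
    ring

/-- Partial fractions: `(P(x) - P(-a)) / (x + a)` has degree `< n`, so only the pole survives. -/
lemma alternating_sum_choose_mul_eval_div {n : ℕ} {P : Polynomial ℝ} (hP : P.natDegree ≤ n)
    {a : ℝ} (ha : 0 < a) :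
    ∑ j ∈ Finset.range (n + 1), (-1 : ℝ) ^ j * n.choose j * (P.eval (j : ℝ) / (a + j)) =
      P.eval (-a) * (n.factorial * Gamma a / Gamma (a + n + 1)) := by
  set Q := P /ₘ (Polynomial.X - Polynomial.C (-a)) with hQ
  have hdiv (x : ℝ) : P.eval x = P.eval (-a) + (a + x) * Q.eval x := by
    have h := congrArg (Polynomial.eval x)
      (Polynomial.modByMonic_add_div P (Polynomial.X - Polynomial.C (-a)))
    rw [Polynomial.modByMonic_X_sub_C_eq_C_eval] at h
    simpa [hQ, add_comm] using h.symm
  have hQsum : ∑ j ∈ Finset.range (n + 1), (-1 : ℝ) ^ j * n.choose j * Q.eval (j : ℝ) = 0 := by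
    rcases n.eq_zero_or_pos with rfl | hn
    · have hQ0 : Q = 0 := by
        rw [hQ, Polynomial.divByMonic_eq_zero_iff (Polynomial.monic_X_sub_C _),
          Polynomial.degree_X_sub_C]
        exact (Polynomial.natDegree_le_iff_degree_le.mp hP).trans_lt (by norm_num)
      simp [hQ0]
    · refine alternating_sum_choose_mul_eval_eq_zero ?_
      rw [hQ, Polynomial.natDegree_divByMonic _ (Polynomial.monic_X_sub_C _),
        Polynomial.natDegree_X_sub_C]
      omega
  have hinv : ∑ j ∈ Finset.range (n + 1), (-1 : ℝ) ^ j * n.choose j * (a + j)⁻¹ =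
      n.factorial * Gamma a / Gamma (a + n + 1) := by
    rw [alternating_sum_choose_mul n (·⁻¹), fwdDiff_iter_inv n ha, ← mul_assoc, ← mul_pow]
    simp
  rw [← hinv, ← add_zero (P.eval (-a) * _), ← hQsum, Finset.mul_sum, ← Finset.sum_add_distrib]
  refine Finset.sum_congr rfl fun j _ => ?_
  have haj : a + j ≠ 0 := by positivity
  rw [hdiv j]
  field_simp

section JacobiPolynomial

open Polynomial

/-- The hypergeometric polynomial `₂F₁(-n, n + a + b + 1; a + 1; t)`. This is the Jacobi polynomial
`p_n^{(a,b)}` in the variable `t = (1 - x) / 2`, normalized to take the value `1` at `x = 1`. -/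
def normalizedJacobi (a b : ℝ) (n : ℕ) : ℝ[X] :=
  ∑ j ∈ Finset.range (n + 1), C ((-1 : ℝ) ^ j * n.choose j *
    ((ascPochhammer ℝ j).eval (a + b + 1 + n) / (ascPochhammer ℝ j).eval (a + 1))) * X ^ j

lemma coeff_normalizedJacobi (a b : ℝ) (n j : ℕ) :
    (normalizedJacobi a b n).coeff j = (-1 : ℝ) ^ j * n.choose j *
      ((ascPochhammer ℝ j).eval (a + b + 1 + n) / (ascPochhammer ℝ j).eval (a + 1)) := by
  rw [normalizedJacobi, finsetSum_coeff]
  simp only [coeff_C_mul_X_pow]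
  rw [Finset.sum_ite_eq]
  split_ifs with hj
  · rfl
  · simp [Nat.choose_eq_zero_of_lt (by simpa using hj : n < j)]

lemma natDegree_normalizedJacobi_le (a b : ℝ) (n : ℕ) : (normalizedJacobi a b n).natDegree ≤ n :=
  natDegree_sum_le_of_forall_le _ _ fun _ hj =>
    (natDegree_C_mul_X_pow_le _ _).trans (Finset.mem_range_succ_iff.mp hj)

lemma coeff_zero_normalizedJacobi (a b : ℝ) (n : ℕ) : (normalizedJacobi a b n).coeff 0 = 1 := by
  simp [coeff_normalizedJacobi]

lemma eval_normalizedJacobi (a b : ℝ) (n : ℕ) (t : ℝ) : (normalizedJacobi a b n).eval t =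
    ∑ j ∈ Finset.range (n + 1), (normalizedJacobi a b n).coeff j * t ^ j :=
  eval_eq_sum_range' (Nat.lt_succ_of_le (natDegree_normalizedJacobi_le a b n)) t

lemma coeff_succ_normalizedJacobi {a : ℝ} (ha : -1 < a) (b : ℝ) (n j : ℕ) :
    (j + 1) * (a + 1 + j) * (normalizedJacobi a b n).coeff (j + 1) =
      -((n - j) * (a + b + 1 + n + j)) * (normalizedJacobi a b n).coeff j := by
  have ha1 : 0 < a + 1 := by linarith
  have haj : a + 1 + j ≠ 0 := by positivity
  have hchoose : (n.choose (j + 1) : ℝ) * (j + 1) = n.choose j * (n - j) := by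
    rcases le_or_gt j n with h | h
    · rw [← Nat.cast_sub h]
      exact_mod_cast Nat.choose_succ_right_eq n j
    · simp [Nat.choose_eq_zero_of_lt h, Nat.choose_eq_zero_of_lt (h.trans j.lt_succ_self)]
  have hpoch : (ascPochhammer ℝ j).eval (a + 1) ≠ 0 := (ascPochhammer_pos j _ ha1).ne'
  simp only [coeff_normalizedJacobi, ascPochhammer_succ_eval, pow_succ]
  field_simp
  linear_combination
    -(a + b + 1 + n + j) * (ascPochhammer ℝ j).eval (a + b + 1 + n) * hchoose

lemma coeff_normalizedJacobi_eq_Gamma {a b : ℝ} {n : ℕ} (ha : -1 < a) (hab : 0 < a + b + 1 + n)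
    (j : ℕ) :
    (normalizedJacobi a b n).coeff j = Gamma (a + 1) / Gamma (a + b + 1 + n) *
      ((-1 : ℝ) ^ j * n.choose j * (Gamma (a + b + 1 + n + j) / Gamma (a + 1 + j))) := by
  have ha1 : 0 < a + 1 := by linarith
  have := Gamma_pos_of_pos ha1
  have := Gamma_pos_of_pos hab
  have hpoch := ascPochhammer_pos j _ ha1
  rw [coeff_normalizedJacobi, Gamma_add_natCast hab, Gamma_add_natCast ha1]
  field_simp

lemma normalizedJacobi_ode {a : ℝ} (ha : -1 < a) (b : ℝ) (n : ℕ) :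
    X * (1 - X) * derivative (derivative (normalizedJacobi a b n)) +
      (C (a + 1) - C (a + b + 2) * X) * derivative (normalizedJacobi a b n) +
      C (n * (n + a + b + 1)) * normalizedJacobi a b n = 0 := by
  ext j
  have hrec := coeff_succ_normalizedJacobi ha b n j
  generalize hp : a + 1 = p at hrec ⊢
  generalize hq : a + b + 2 = q
  generalize hl : (n : ℝ) * (n + a + b + 1) = l
  rcases j with _ | _ | j <;>
  · simp only [mul_assoc, mul_sub, sub_mul, one_mul, mul_one, zero_add, add_zero, sub_zero,
      mul_zero, zero_mul, neg_sub, coeff_add, coeff_sub, coeff_zero, coeff_C_mul, coeff_X_mul,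
      coeff_X_zero, coeff_derivative, mul_coeff_zero, coeff_C_zero, Nat.cast_add,
      Nat.cast_zero, Nat.cast_one] at hrec ⊢
    subst hp hq hl
    linear_combination hrec

lemma intervalIntegrable_eval_mul_rpow_mul_one_sub_rpow (P : ℝ[X]) {p q : ℝ} (hp : -1 < p)
    (hq : -1 < q) :
    IntervalIntegrable (fun t => P.eval t * (t ^ p * (1 - t) ^ q)) volume 0 1 :=
  (intervalIntegrable_rpow_mul_one_sub_rpow hp hq).continuousOn_mul P.continuousOn

lemma integral_normalizedJacobi_mul_rpow (a : ℝ) {b p : ℝ} (n : ℕ) (hb : -1 < b) (hp : 0 < p) :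
    ∫ t in (0 : ℝ)..1, (normalizedJacobi a b n).eval t * (t ^ (p - 1) * (1 - t) ^ b) =
      Gamma (b + 1) * ∑ j ∈ Finset.range (n + 1), (normalizedJacobi a b n).coeff j *
        (Gamma (p + j) / Gamma (p + b + 1 + j)) := by
  have hbeta (j : ℕ) : ∫ t in (0 : ℝ)..1, t ^ j * (t ^ (p - 1) * (1 - t) ^ b) =
      Gamma (b + 1) * (Gamma (p + j) / Gamma (p + b + 1 + j)) := by
    rw [show p + b + 1 + j = p + j + (b + 1) by ring, mul_div_assoc', mul_comm (Gamma (b + 1)),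
      ← integral_rpow_mul_one_sub_rpow (by positivity) (by linarith)]
    refine intervalIntegral.integral_congr_Ioo_of_le zero_le_one fun t ht => ?_
    rw [add_sub_cancel_right, add_sub_right_comm, rpow_add ht.1, rpow_natCast]
    ring
  simp only [eval_normalizedJacobi, Finset.sum_mul, mul_assoc]
  rw [intervalIntegral.integral_finsetSum, Finset.mul_sum]
  · refine Finset.sum_congr rfl fun j _ => ?_
    rw [intervalIntegral.integral_const_mul, hbeta]
    ring
  · intro j _
    simpa using (intervalIntegrable_eval_mul_rpow_mul_one_sub_rpow (X ^ j)
      (by linarith) hb).const_mul _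

lemma integral_normalizedJacobi_mul_rpow_add_eq_zero {a b : ℝ} (ha : -1 < a) (hb : -1 < b)
    {k n : ℕ} (hkn : k < n) :
    ∫ t in (0 : ℝ)..1, (normalizedJacobi a b n).eval t * (t ^ (a + k) * (1 - t) ^ b) = 0 := by
  obtain ⟨l, rfl⟩ := Nat.exists_eq_add_of_lt hkn
  set P := (ascPochhammer ℝ k).comp (X + C (a + 1)) *
    (ascPochhammer ℝ l).comp (X + C (a + b + 2 + k))
  have hdeg : P.natDegree < k + l + 1 := by
    refine natDegree_mul_le.trans_lt ?_
    simp only [natDegree_comp, natDegree_X_add_C, ascPochhammer_natDegree]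
    omega
  have hterm (j : ℕ) : (normalizedJacobi a b (k + l + 1)).coeff j *
      (Gamma (a + k + 1 + j) / Gamma (a + k + 1 + b + 1 + j)) =
      Gamma (a + 1) / Gamma (a + b + 1 + (k + l + 1 : ℕ)) *
        ((-1 : ℝ) ^ j * (k + l + 1).choose j * P.eval (j : ℝ)) := by
    have := j.cast_nonneg (α := ℝ)
    have := k.cast_nonneg (α := ℝ)
    have := l.cast_nonneg (α := ℝ)
    have haj : 0 < a + 1 + j := by linarith
    have habj : 0 < a + b + 2 + k + j := by linarith
    have := Gamma_pos_of_pos haj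
    have := Gamma_pos_of_pos habj
    have hP : P.eval (j : ℝ) = (ascPochhammer ℝ k).eval (a + 1 + j) *
        (ascPochhammer ℝ l).eval (a + b + 2 + k + j) := by
      simp [P, add_comm]
    rw [coeff_normalizedJacobi_eq_Gamma ha (by push_cast; linarith),
      show a + b + 1 + ((k + l + 1 : ℕ) : ℝ) + j = a + b + 2 + k + j + l by push_cast; ring,
      show a + k + 1 + (j : ℝ) = a + 1 + j + k by ring,
      show a + k + 1 + b + 1 + (j : ℝ) = a + b + 2 + k + j by ring, hP,
      Gamma_add_natCast haj, Gamma_add_natCast habj]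
    field_simp
  rw [show a + (k : ℝ) = a + k + 1 - 1 by ring,
    integral_normalizedJacobi_mul_rpow a _ hb (by linarith [k.cast_nonneg (α := ℝ)])]
  simp only [hterm, ← Finset.mul_sum, alternating_sum_choose_mul_eval_eq_zero hdeg, mul_zero]

lemma integral_normalizedJacobi_mul_eval_eq_zero {a b : ℝ} (ha : -1 < a) (hb : -1 < b)
    {n : ℕ} {P : ℝ[X]} (hP : P.natDegree < n) :
    ∫ t in (0 : ℝ)..1, (normalizedJacobi a b n).eval t * P.eval t * (t ^ a * (1 - t) ^ b) = 0 := by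
  have hterm (k : ℕ) : ∫ t in (0 : ℝ)..1,
      ((normalizedJacobi a b n) * (C (P.coeff k) * X ^ k)).eval t * (t ^ a * (1 - t) ^ b) =
      P.coeff k * ∫ t in (0 : ℝ)..1,
        (normalizedJacobi a b n).eval t * (t ^ (a + k) * (1 - t) ^ b) := by
    rw [← intervalIntegral.integral_const_mul]
    refine intervalIntegral.integral_congr_Ioo_of_le zero_le_one fun t ht => ?_
    simp only [eval_mul, eval_C, eval_pow, eval_X, rpow_add ht.1, rpow_natCast]
    ring
  have hsum (t : ℝ) : (normalizedJacobi a b n).eval t * P.eval t * (t ^ a * (1 - t) ^ b) =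
      ∑ k ∈ Finset.range n,
        ((normalizedJacobi a b n) * (C (P.coeff k) * X ^ k)).eval t * (t ^ a * (1 - t) ^ b) := by
    simp only [← Finset.sum_mul, ← eval_finsetSum, ← Finset.mul_sum, ← eval_mul,
      ← P.as_sum_range_C_mul_X_pow' hP]
  simp only [hsum]
  rw [intervalIntegral.integral_finsetSum fun _ _ =>
    intervalIntegrable_eval_mul_rpow_mul_one_sub_rpow _ ha hb]
  refine Finset.sum_eq_zero fun k hk => ?_
  rw [hterm, integral_normalizedJacobi_mul_rpow_add_eq_zero ha hb (Finset.mem_range.mp hk),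
    mul_zero]

/-- The moment `∫₀¹ Y² t^(a-1-v) (1-t)^b dt` of the square of the normalized Jacobi polynomial `Y`.
The exponent of `t` is shifted so that `v = 0` is the moment with a closed form. -/
def jacobiSqMoment (a b : ℝ) (n : ℕ) (v : ℝ) : ℝ :=
  ∫ t in (0 : ℝ)..1, (normalizedJacobi a b n).eval t ^ 2 * (t ^ (a - 1 - v) * (1 - t) ^ b)

lemma jacobiSqMoment_nonneg (a b : ℝ) (n : ℕ) (v : ℝ) : 0 ≤ jacobiSqMoment a b n v := by
  refine intervalIntegral.integral_nonneg zero_le_one fun t ht => ?_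
  have := rpow_nonneg ht.1 (a - 1 - v)
  have := rpow_nonneg (sub_nonneg.mpr ht.2) b
  positivity

lemma intervalIntegrable_normalizedJacobi_sq_mul {a b : ℝ} (n : ℕ) {v : ℝ} (hb : -1 < b)
    (hv : v < a) :
    IntervalIntegrable (fun t => (normalizedJacobi a b n).eval t ^ 2 *
      (t ^ (a - 1 - v) * (1 - t) ^ b)) volume 0 1 := by
  simpa [sq] using intervalIntegrable_eval_mul_rpow_mul_one_sub_rpow
    (normalizedJacobi a b n * normalizedJacobi a b n) (by linarith : -1 < a - 1 - v) hb

lemma integral_normalizedJacobi_mul_rpow_sub_one {a b : ℝ} (n : ℕ) (ha : 0 < a) (hb : -1 < b)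
    (hab : 0 < a + b + 1) :
    ∫ t in (0 : ℝ)..1, (normalizedJacobi a b n).eval t * (t ^ (a - 1) * (1 - t) ^ b) =
      Gamma a * Gamma (a + 1) * (n.factorial / Gamma (a + n + 1)) *
        (Gamma (b + 1 + n) / Gamma (a + b + 1 + n)) := by
  set P := (ascPochhammer ℝ n).comp (X + C (a + b + 1))
  have hdeg : P.natDegree ≤ n := by
    simp only [P, natDegree_comp, natDegree_X_add_C, ascPochhammer_natDegree, mul_one, le_refl]
  have hPa : Gamma (b + 1 + n) = P.eval (-a) * Gamma (b + 1) := by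
    rw [Gamma_add_natCast (by linarith)]
    simp [P, show -a + (a + b + 1) = b + 1 by ring]
  have hterm (j : ℕ) : (normalizedJacobi a b n).coeff j * (Gamma (a + j) / Gamma (a + b + 1 + j)) =
      Gamma (a + 1) / Gamma (a + b + 1 + n) *
        ((-1 : ℝ) ^ j * n.choose j * (P.eval (j : ℝ) / (a + j))) := by
    have haj : 0 < a + j := by positivity
    have habj : 0 < a + b + 1 + j := by positivity
    have := Gamma_pos_of_pos haj
    have := Gamma_pos_of_pos habj
    have hPj : P.eval (j : ℝ) = (ascPochhammer ℝ n).eval (a + b + 1 + j) := by simp [P, add_comm]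
    rw [coeff_normalizedJacobi_eq_Gamma (by linarith) (by positivity),
      add_right_comm _ (n : ℝ), add_right_comm a 1, Gamma_add_natCast habj,
      Gamma_add_one haj.ne', hPj]
    field_simp
  rw [integral_normalizedJacobi_mul_rpow a n hb ha]
  simp only [hterm, ← Finset.mul_sum, alternating_sum_choose_mul_eval_div hdeg ha, hPa]
  ring

lemma jacobiSqMoment_zero {a b : ℝ} {n : ℕ} (ha : 0 < a) (hb : -1 < b) (hn : 0 < n) :
    jacobiSqMoment a b n 0 = Gamma a * Gamma (a + 1) * (n.factorial / Gamma (a + n + 1)) *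
      (Gamma (b + 1 + n) / Gamma (a + b + 1 + n)) := by
  rw [← integral_normalizedJacobi_mul_rpow_sub_one n ha hb (by linarith), jacobiSqMoment]
  set Y := normalizedJacobi a b n
  have hdeg : Y.divX.natDegree < n := by
    have : Y.natDegree ≤ n := natDegree_normalizedJacobi_le a b n
    rw [natDegree_divX_eq_natDegree_tsub_one]
    omega
  have hsplit (t : ℝ) : Y.eval t = Y.divX.eval t * t + 1 := by
    simpa [Y, coeff_zero_normalizedJacobi] using (congrArg (eval t) Y.divX_mul_X_add).symm
  have horth := integral_normalizedJacobi_mul_eval_eq_zero (by linarith : -1 < a) hb hdeg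
  refine sub_eq_zero.mp (Eq.trans ?_ horth)
  rw [← intervalIntegral.integral_sub
    (intervalIntegrable_normalizedJacobi_sq_mul n hb ha)
    (intervalIntegrable_eval_mul_rpow_mul_one_sub_rpow Y (by linarith) hb)]
  refine intervalIntegral.integral_congr_Ioo_of_le zero_le_one fun t ht => ?_
  have hta : t ^ a = t ^ (a - 1) * t := by rw [← rpow_add_one ht.1.ne', sub_add_cancel]
  simp only [sub_zero, hta]
  linear_combination Y.eval t * (t ^ (a - 1) * (1 - t) ^ b) * hsplit t

lemma integral_eval_mul_add_derivative_eq_zero (P : ℝ[X]) {p q : ℝ} (hp : 0 < p) (hq : 0 < q) :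
    ∫ t in (0 : ℝ)..1, ((C p * (1 - X) - C q * X) * P + X * (1 - X) * derivative P).eval t *
      (t ^ (p - 1) * (1 - t) ^ (q - 1)) = 0 := by
  have hcont : Continuous fun t : ℝ => P.eval t * (t ^ p * (1 - t) ^ q) :=
    P.continuous.mul ((continuous_id.rpow_const fun _ => Or.inr hp.le).mul
      ((continuous_const.sub continuous_id).rpow_const fun _ => Or.inr hq.le))
  rw [intervalIntegral.integral_eq_sub_of_hasDerivAt_of_le zero_le_one hcont.continuousOn ?_
    (intervalIntegrable_eval_mul_rpow_mul_one_sub_rpow _ (by linarith) (by linarith))]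
  · simp [zero_rpow hp.ne', zero_rpow hq.ne']
  intro t ht
  have ht1 : 0 < 1 - t := sub_pos.mpr ht.2
  refine ((P.hasDerivAt t).mul (((hasDerivAt_id t).rpow_const (Or.inl ht.1.ne')).mul
    (((hasDerivAt_id t).const_sub 1).rpow_const (Or.inl ht1.ne')))).congr_deriv ?_
  have hp1 : t ^ p = t ^ (p - 1) * t := by rw [← rpow_add_one ht.1.ne', sub_add_cancel]
  have hq1 : (1 - t) ^ q = (1 - t) ^ (q - 1) * (1 - t) := by
    rw [← rpow_add_one ht1.ne', sub_add_cancel]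
  simp only [id, Pi.mul_apply, eval_add, eval_mul, eval_sub, eval_C, eval_X, eval_one, hp1, hq1]
  ring

/-- The quadratic form in `Y, Y'` whose divergence against `t^(a-u-2) (1-t)^b` involves only `Y²`,
where `Y = normalizedJacobi a b n`. It encodes the third-order linear equation satisfied by `Y²`. -/
def jacobiEnergy (a b : ℝ) (n : ℕ) (u : ℝ) : ℝ[X] :=
  letI Y := normalizedJacobi a b n
  2 * X ^ 2 * (1 - X) * derivative Y ^ 2 + 2 * C (n * (n + a + b + 1)) * X * Y ^ 2 +
    2 * X * (C (a + 1 + u) * (1 - X) - C b * X) * Y * derivative Y +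
    (C ((u + 1) * (a + 1 + u)) - C (u * (a + b + 1 + u)) * X) * Y ^ 2

lemma jacobiEnergy_divergence {a : ℝ} (ha : -1 < a) (b : ℝ) (n : ℕ) (u : ℝ) :
    (C (a - u - 1) * (1 - X) - C (b + 1) * X) * jacobiEnergy a b n u +
        X * (1 - X) * derivative (jacobiEnergy a b n u) =
      (C ((u + 1) * (a ^ 2 - (u + 1) ^ 2)) -
        C ((2 * u + 1) * (2 * (n * (n + a + b + 1)) + (a + 1) * (a + b) - u * (u + 1))) * X +
        C (u * ((2 * n + a + b + 1) ^ 2 - u ^ 2)) * X ^ 2) * normalizedJacobi a b n ^ 2 := by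
  have hode := normalizedJacobi_ode ha b n
  set Y := normalizedJacobi a b n with hY
  simp only [jacobiEnergy, ← hY, derivative_add, derivative_mul, derivative_sub, derivative_pow,
    derivative_C, derivative_X, derivative_one, derivative_ofNat]
  simp only [C_add, C_mul, C_sub, C_pow, C_1, C_ofNat, Nat.cast_ofNat] at hode ⊢
  linear_combination (4 * X ^ 2 * (1 - X) * derivative Y +
    2 * X * ((C a + 1 + C u) * (1 - X) - C b * X) * Y) * hode

lemma jacobiSqMoment_recurrence {a b : ℝ} (n : ℕ) {u : ℝ} (ha : -1 < a) (hb : -1 < b)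
    (hu : u + 1 < a) :
    (u + 1) * (a ^ 2 - (u + 1) ^ 2) * jacobiSqMoment a b n (u + 1) -
      (2 * u + 1) * (2 * (n * (n + a + b + 1)) + (a + 1) * (a + b) - u * (u + 1)) *
        jacobiSqMoment a b n u +
      u * ((2 * n + a + b + 1) ^ 2 - u ^ 2) * jacobiSqMoment a b n (u - 1) = 0 := by
  have hint (v : ℝ) (hv : v < a) := intervalIntegrable_normalizedJacobi_sq_mul n hb hv
  rw [← integral_eval_mul_add_derivative_eq_zero (jacobiEnergy a b n u)
    (by linarith : 0 < a - u - 1) (by linarith : 0 < b + 1), jacobiEnergy_divergence ha,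
    jacobiSqMoment, jacobiSqMoment, jacobiSqMoment, ← intervalIntegral.integral_const_mul,
    ← intervalIntegral.integral_const_mul, ← intervalIntegral.integral_const_mul,
    ← intervalIntegral.integral_sub ((hint (u + 1) hu).const_mul _)
      ((hint u (by linarith)).const_mul _),
    ← intervalIntegral.integral_add (((hint (u + 1) hu).const_mul _).sub
      ((hint u (by linarith)).const_mul _)) ((hint (u - 1) (by linarith)).const_mul _)]
  refine intervalIntegral.integral_congr_Ioo_of_le zero_le_one fun t ht => ?_
  have h0 : t ^ (a - 1 - u) = t ^ (a - 1 - (u + 1)) * t := by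
    rw [← rpow_add_one ht.1.ne']; ring_nf
  have h1 : t ^ (a - 1 - (u - 1)) = t ^ (a - 1 - (u + 1)) * t ^ 2 := by
    rw [← rpow_add_natCast ht.1.ne']; ring_nf
  simp only [eval_mul, eval_add, eval_sub, eval_pow, eval_C, eval_X, h0, h1, add_sub_cancel_right,
    sub_right_comm a u 1, sub_sub (a - 1) u 1]
  ring

lemma jacobiSqMoment_succ_le {a b : ℝ} (n : ℕ) {u : ℝ} (hb : -1 < b) (hu : 0 ≤ u)
    (hua : u + 1 < a) :
    (1 - ((u + 1) / a) ^ 2) * jacobiSqMoment a b n (u + 1) ≤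
      (2 * (n + a + b + 1) / a) ^ 2 * jacobiSqMoment a b n u := by
  have : (0 : ℝ) ≤ n := n.cast_nonneg
  have ha : 0 < a := by linarith
  have hrec := jacobiSqMoment_recurrence n (by linarith) hb hua
  have hdrop : 0 ≤ u * ((2 * n + a + b + 1) ^ 2 - u ^ 2) * jacobiSqMoment a b n (u - 1) :=
    mul_nonneg (mul_nonneg hu (sub_nonneg.mpr (by gcongr; linarith))) (jacobiSqMoment_nonneg ..)
  have hcoeff : (2 * u + 1) * (2 * (n * (n + a + b + 1)) + (a + 1) * (a + b) - u * (u + 1)) ≤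
      (u + 1) * (4 * (n + a + b + 1) ^ 2) := by
    have hlin : 2 * (2 * (n * (n + a + b + 1)) + (a + 1) * (a + b)) ≤ 4 * (n + a + b + 1) ^ 2 := by
      nlinarith
    have : 0 ≤ 2 * (n * (n + a + b + 1)) + (a + 1) * (a + b) := by
      have : 0 ≤ n + a + b + 1 := by linarith
      have : 0 ≤ a + b := by linarith
      positivity
    nlinarith [mul_nonneg hu hu]
  have hmul := mul_le_mul_of_nonneg_right hcoeff (jacobiSqMoment_nonneg a b n u)
  have hstep : (a ^ 2 - (u + 1) ^ 2) * jacobiSqMoment a b n (u + 1) ≤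
      4 * (n + a + b + 1) ^ 2 * jacobiSqMoment a b n u := by
    refine le_of_mul_le_mul_left ?_ (by linarith : 0 < u + 1)
    linarith
  have hscale := div_le_div_of_nonneg_right hstep (sq_nonneg a)
  calc _ = (a ^ 2 - (u + 1) ^ 2) * jacobiSqMoment a b n (u + 1) / a ^ 2 := by field_simp
    _ ≤ _ := hscale
    _ = _ := by field_simp; ring

lemma jacobiSqMoment_le_rpow_mul {a b : ℝ} {n : ℕ} {u x : ℝ} (ha : 1 < a) (hb : -1 < b)
    (hu : 0 ≤ u) (hu1 : u ≤ 1) (hx : 0 < x)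
    (h : jacobiSqMoment a b n 1 ≤ x * jacobiSqMoment a b n 0) :
    jacobiSqMoment a b n u ≤ x ^ u * jacobiSqMoment a b n 0 := by
  have hint (v : ℝ) (hv : v < a) := intervalIntegrable_normalizedJacobi_sq_mul n hb hv
  have hmean : jacobiSqMoment a b n u ≤
      x ^ u * (1 - u) * jacobiSqMoment a b n 0 + x ^ u * u / x * jacobiSqMoment a b n 1 := by
    simp only [jacobiSqMoment, ← intervalIntegral.integral_const_mul]
    rw [← intervalIntegral.integral_add ((hint 0 (by linarith)).const_mul _)
      ((hint 1 ha).const_mul _)]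
    refine intervalIntegral.integral_mono_on_of_le_Ioo zero_le_one (hint u (by linarith))
      (((hint 0 (by linarith)).const_mul _).add ((hint 1 ha).const_mul _)) fun t ht => ?_
    have ht0 : 0 < t := ht.1
    have hamgm := geom_mean_le_arith_mean2_weighted (sub_nonneg.mpr hu1) hu zero_le_one
      (by positivity : 0 ≤ (x * t)⁻¹) (sub_add_cancel 1 u)
    rw [one_rpow, one_mul, mul_one, inv_rpow (by positivity), mul_rpow hx.le ht0.le] at hamgm
    have hweight : t ^ (a - 1 - u) ≤
        x ^ u * (1 - u) * t ^ (a - 1 - 0) + x ^ u * u / x * t ^ (a - 1 - 1) := by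
      rw [rpow_sub ht0 _ u, rpow_sub_one ht0.ne' (a - 1), sub_zero]
      calc t ^ (a - 1) / t ^ u = x ^ u * t ^ (a - 1) * (x ^ u * t ^ u)⁻¹ := by field_simp
        _ ≤ x ^ u * t ^ (a - 1) * (1 - u + u * (x * t)⁻¹) := by gcongr
        _ = _ := by field_simp
    have := mul_le_mul_of_nonneg_left hweight (mul_nonneg (sq_nonneg
      ((normalizedJacobi a b n).eval t)) (rpow_nonneg (sub_nonneg.mpr ht.2.le) b))
    linarith
  calc _ ≤ _ := hmean
    _ ≤ x ^ u * (1 - u) * jacobiSqMoment a b n 0 +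
        x ^ u * u / x * (x * jacobiSqMoment a b n 0) := by gcongr
    _ = _ := by field_simp; ring

lemma jacobiSqMoment_add_natCast_mul_prod_le {a b : ℝ} (n : ℕ) {u : ℝ} {k : ℕ} (hb : -1 < b)
    (hu : 0 ≤ u) (huk : u + k < a) :
    jacobiSqMoment a b n (u + k) * ∏ i ∈ Finset.range k, (1 - ((u + i + 1) / a) ^ 2) ≤
      ((2 * (n + a + b + 1) / a) ^ 2) ^ k * jacobiSqMoment a b n u := by
  induction k with
  | zero => simp
  | succ k ih =>
    push_cast at huk ⊢
    have hprod : 0 ≤ ∏ i ∈ Finset.range k, (1 - ((u + i + 1) / a) ^ 2) := by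
      refine Finset.prod_nonneg fun i hi => ?_
      have hik : (i : ℝ) ≤ k := by exact_mod_cast (Finset.mem_range.mp hi).le
      have : (u + i + 1) / a ≤ 1 := div_le_one_of_le₀ (by linarith) (by linarith)
      have : 0 ≤ (u + i + 1) / a := div_nonneg (by positivity) (by linarith)
      nlinarith
    have hstep := jacobiSqMoment_succ_le n hb (by positivity : 0 ≤ u + k)
      (by linarith : u + k + 1 < a)
    rw [Finset.prod_range_succ, ← add_assoc]
    calc _ = (1 - ((u + k + 1) / a) ^ 2) * jacobiSqMoment a b n (u + k + 1) *
          ∏ i ∈ Finset.range k, (1 - ((u + i + 1) / a) ^ 2) := by ring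
      _ ≤ (2 * (n + a + b + 1) / a) ^ 2 * jacobiSqMoment a b n (u + k) *
          ∏ i ∈ Finset.range k, (1 - ((u + i + 1) / a) ^ 2) := by gcongr
      _ = (2 * (n + a + b + 1) / a) ^ 2 * (jacobiSqMoment a b n (u + k) *
          ∏ i ∈ Finset.range k, (1 - ((u + i + 1) / a) ^ 2)) := by ring
      _ ≤ (2 * (n + a + b + 1) / a) ^ 2 * (((2 * (n + a + b + 1) / a) ^ 2) ^ k *
          jacobiSqMoment a b n u) := mul_le_mul_of_nonneg_left (ih (by linarith)) (sq_nonneg _)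
      _ = _ := by ring

lemma prod_range_one_sub_div_sq (k : ℕ) :
    ∏ i ∈ Finset.range (k + 1), (1 - ((i : ℝ) / (k + 1)) ^ 2) =
      ((2 * (k + 1)).factorial : ℝ) / (2 * ((k : ℝ) + 1) ^ (2 * (k + 1))) := by
  have hfactor : ∏ i ∈ Finset.range (k + 1), (1 - ((i : ℝ) / (k + 1)) ^ 2) * ((k : ℝ) + 1) ^ 2 =
      (((k + 1).descFactorial (k + 1) * (k + 1).ascFactorial (k + 1) : ℕ) : ℝ) := by
    rw [Nat.descFactorial_eq_prod_range, Nat.ascFactorial_eq_prod_range,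
      ← Finset.prod_mul_distrib, Nat.cast_prod]
    refine Finset.prod_congr rfl fun i hi => ?_
    rw [Nat.cast_mul, Nat.cast_sub (Finset.mem_range.mp hi).le]
    push_cast
    field_simp
    ring
  have hfact : 2 * ((k + 1).descFactorial (k + 1) * (k + 1).ascFactorial (k + 1)) =
      (2 * (k + 1)).factorial := by
    rw [Nat.descFactorial_self, Nat.factorial_succ k, mul_assoc (k + 1),
      Nat.factorial_mul_ascFactorial, show 2 * (k + 1) = k + (k + 1) + 1 by ring,
      Nat.factorial_succ]
    ring
  rw [eq_div_iff (by positivity), ← hfact, Nat.cast_mul, ← hfactor, Finset.prod_mul_distrib,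
    Finset.prod_const, Finset.card_range, pow_mul]
  push_cast
  ring

lemma pow_div_two_le_prod_range_one_sub_div_sq (k : ℕ) :
    (2 / exp 1) ^ (2 * (k + 1)) / 2 ≤
      ∏ i ∈ Finset.range (k + 1), (1 - ((i : ℝ) / (k + 1)) ^ 2) := by
  have hstirling := pow_div_factorial_le_exp (2 * ((k : ℝ) + 1)) (by positivity) (2 * (k + 1))
  rw [prod_range_one_sub_div_sq, div_pow, ← exp_nat_mul, mul_one]
  push_cast
  rw [div_le_iff₀ (by positivity), mul_pow] at hstirling
  rw [div_div, div_le_div_iff₀ (by positivity) (by positivity)]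
  linarith

lemma pow_div_two_le_prod_range_one_sub_shifted_div_sq {a u : ℝ} (k : ℕ) (hu : 0 ≤ u)
    (hu1 : u ≤ 1) (hua : u + k + 1 ≤ a) :
    (2 / exp 1) ^ (2 * (k + 2)) / 2 ≤
      ∏ i ∈ Finset.range k, (1 - ((u + i + 1) / a) ^ 2) := by
  have ha : 0 < a := by linarith [k.cast_nonneg (α := ℝ)]
  have hratio : ∀ i ∈ Finset.range k,
      0 ≤ 1 - (((i + 1 + 1 : ℕ) : ℝ) / ((k + 1 : ℕ) + 1)) ^ 2 ∧
        1 - (((i + 1 + 1 : ℕ) : ℝ) / ((k + 1 : ℕ) + 1)) ^ 2 ≤ 1 - ((u + i + 1) / a) ^ 2 := by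
    intro i hi
    have hik : (i : ℝ) ≤ k := by exact_mod_cast (Finset.mem_range.mp hi).le
    push_cast
    constructor
    · rw [sub_nonneg, sq_le_one_iff₀ (by positivity)]
      exact div_le_one_of_le₀ (by linarith) (by positivity)
    · gcongr 1 - ?_ ^ 2
      rw [div_le_div_iff₀ ha (by positivity)]
      nlinarith
  refine (pow_div_two_le_prod_range_one_sub_div_sq (k + 1)).trans ?_
  rw [Finset.prod_range_succ', Finset.prod_range_succ', mul_assoc]
  refine (mul_le_of_le_one_right (Finset.prod_nonneg fun i hi => (hratio i hi).1) ?_).trans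
    (Finset.prod_le_prod (fun i hi => (hratio i hi).1) fun i hi => (hratio i hi).2)
  norm_num
  positivity

lemma jacobiSqMoment_one_le {a b : ℝ} (n : ℕ) (ha : 2 ≤ a) (hb : -1 < b) :
    jacobiSqMoment a b n 1 ≤ (exp 1 * (n + a + b + 1) / a) ^ 2 * jacobiSqMoment a b n 0 := by
  have hstep := jacobiSqMoment_succ_le n hb le_rfl (by linarith : 0 + 1 < a)
  have hexp : (2 / exp 1) ^ 2 ≤ 1 - (1 / a) ^ 2 := by
    have : 2 / exp 1 ≤ 3 / 4 := by
      rw [div_le_iff₀ (exp_pos 1)]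
      linarith [exp_one_gt_d9]
    have : 0 ≤ 2 / exp 1 := by positivity
    have : 1 / a ≤ 1 / 2 := one_div_le_one_div_of_le two_pos ha
    have : 0 ≤ 1 / a := by positivity
    nlinarith
  rw [zero_add] at hstep
  refine le_of_mul_le_mul_left ?_ (by positivity : 0 < (2 / exp 1) ^ 2)
  calc _ ≤ _ := mul_le_mul_of_nonneg_right hexp (jacobiSqMoment_nonneg ..)
    _ ≤ _ := hstep
    _ = _ := by field_simp

lemma jacobiSqMoment_le {a b : ℝ} (n : ℕ) {v : ℝ} (ha : 2 ≤ a) (hb : -1 < b) (hv : 0 ≤ v)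
    (hva : v + 1 ≤ a) :
    jacobiSqMoment a b n v ≤
      exp 4 / 8 * (exp 1 * (n + a + b + 1) / a) ^ (2 * v) * jacobiSqMoment a b n 0 := by
  have : 0 < n + a + b + 1 := by linarith [n.cast_nonneg (α := ℝ)]
  have hsplit : Int.fract v + ⌊v⌋₊ = v := by
    rw [natCast_floor_eq_intCast_floor hv, Int.fract_add_floor]
  have hfract := jacobiSqMoment_le_rpow_mul (by linarith) hb (Int.fract_nonneg v)
    (Int.fract_lt_one v).le (by positivity) (jacobiSqMoment_one_le n ha hb)
  have hprod := pow_div_two_le_prod_range_one_sub_shifted_div_sq (a := a) ⌊v⌋₊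
    (Int.fract_nonneg v) (Int.fract_lt_one v).le (by rwa [hsplit])
  have hiter := jacobiSqMoment_add_natCast_mul_prod_le n hb (Int.fract_nonneg v)
    (by rw [hsplit]; linarith : Int.fract v + ⌊v⌋₊ < a)
  set q := 2 / exp 1 with hq
  have hq0 : 0 < q := by positivity
  have hqR : 2 * (n + a + b + 1) / a = q * (exp 1 * (n + a + b + 1) / a) := by
    rw [hq]
    field_simp
  rw [hsplit, hqR] at hiter
  set R := exp 1 * (n + a + b + 1) / a
  have hR0 : 0 < R := by positivity
  have hpow : R ^ (2 * v) = (R ^ 2) ^ ⌊v⌋₊ * (R ^ 2) ^ Int.fract v := by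
    rw [rpow_mul hR0.le, rpow_two, ← rpow_natCast (R ^ 2) ⌊v⌋₊, ← rpow_add (by positivity),
      add_comm, hsplit]
  have hexp : exp 4 / 8 = 2 / q ^ 4 := by
    rw [hq, div_pow, ← exp_nat_mul, mul_one, Nat.cast_ofNat]
    field_simp
    norm_num
  rw [hpow, hexp]
  refine le_of_mul_le_mul_right ?_ (by positivity : 0 < q ^ (2 * (⌊v⌋₊ + 2)) / 2)
  calc _ ≤ _ := mul_le_mul_of_nonneg_left hprod (jacobiSqMoment_nonneg ..)
    _ ≤ _ := hiter
    _ ≤ ((q * R) ^ 2) ^ ⌊v⌋₊ * ((R ^ 2) ^ Int.fract v * jacobiSqMoment a b n 0) := by gcongr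
    _ = _ := by
      field_simp
      rw [mul_pow, mul_add, pow_add, pow_mul]
      ring

lemma jacobiSqMoment_le_of_sq_le {a b v : ℝ} {n : ℕ} (ha : 2 ≤ a) (hb : -1 < b)
    (hn : (a + b + 1) ^ 2 ≤ n) (hv : 0 ≤ v) (hva : v + 1 ≤ a) :
    jacobiSqMoment a b n v ≤ exp 8 / 8 * exp (2 * v) * (n : ℝ) ^ (2 * v) *
      (a + 1) ^ (-(2 * v)) * jacobiSqMoment a b n 0 := by
  have ha0 : 0 < a := by linarith
  have hn0 : (0 : ℝ) < n := by nlinarith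
  have hnum : (n + a + b + 1) ^ (2 * v) ≤ exp 2 * n ^ (2 * v) := by
    calc _ = (n + (a + b + 1)) ^ (2 * v) := by ring_nf
      _ ≤ exp (2 * v * (a + b + 1) / n) * n ^ (2 * v) :=
        add_rpow_le_exp_mul_rpow hn0 (by linarith) (by positivity)
      _ ≤ _ := by
        gcongr
        rw [div_le_iff₀ hn0]
        nlinarith
  have hden : (a + 1) ^ (2 * v) ≤ exp 2 * a ^ (2 * v) := by
    refine (add_rpow_le_exp_mul_rpow ha0 (by linarith) (by positivity)).trans ?_
    gcongr
    rw [mul_one, div_le_iff₀ ha0]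
    linarith
  have hinv : (a ^ (2 * v))⁻¹ ≤ exp 2 * (a + 1) ^ (-(2 * v)) := by
    rw [rpow_neg (by positivity), inv_le_iff_one_le_mul₀ (by positivity), mul_assoc,
      inv_mul_eq_div, ← mul_div_assoc, one_le_div (by positivity)]
    exact hden
  have hsplit : (exp 1 * (n + a + b + 1) / a) ^ (2 * v) =
      exp (2 * v) * (n + a + b + 1) ^ (2 * v) * (a ^ (2 * v))⁻¹ := by
    rw [div_rpow (mul_nonneg (exp_pos 1).le (by linarith)) ha0.le,
      mul_rpow (exp_pos 1).le (by linarith), exp_one_rpow, div_eq_mul_inv]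
  refine (jacobiSqMoment_le n ha hb hv hva).trans
    (mul_le_mul_of_nonneg_right ?_ (jacobiSqMoment_nonneg ..))
  rw [hsplit]
  calc _ ≤ exp 4 / 8 * (exp (2 * v) * (exp 2 * n ^ (2 * v)) *
        (exp 2 * (a + 1) ^ (-(2 * v)))) := by gcongr
    _ = exp (4 + 2 + 2) / 8 * exp (2 * v) * n ^ (2 * v) * (a + 1) ^ (-(2 * v)) := by
      rw [exp_add, exp_add]
      ring
    _ = _ := by norm_num

lemma jacobiSqMoment_zero_le {a b : ℝ} {n : ℕ} (ha : 2 ≤ a) (hb : -1 < b) (hn : 0 < n) :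
    jacobiSqMoment a b n 0 ≤ 3 / 2 * Gamma (a + 1) ^ 2 * (a + 1)⁻¹ * (n : ℝ) ^ (-(2 * a)) := by
  have hn0 : (0 : ℝ) < n := by exact_mod_cast hn
  have := Gamma_pos_of_pos (by linarith : 0 < a + 1)
  have hΓ : Gamma a ≤ 3 / 2 * Gamma (a + 1) * (a + 1)⁻¹ := by
    have := Gamma_pos_of_pos (by linarith : 0 < a)
    rw [Gamma_add_one (by linarith), ← div_eq_mul_inv, le_div_iff₀ (by linarith)]
    nlinarith
  have hfact : (n.factorial : ℝ) / Gamma (a + n + 1) ≤ (n : ℝ) ^ (-a) := by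
    rw [← Gamma_nat_eq_factorial, show a + n + 1 = n + 1 + a by ring]
    exact Gamma_div_Gamma_add_le_rpow_neg hn0 (by linarith) (by linarith)
  have hratio : Gamma (b + 1 + n) / Gamma (a + b + 1 + n) ≤ (n : ℝ) ^ (-a) := by
    rw [show a + b + 1 + n = b + 1 + n + a by ring]
    exact Gamma_div_Gamma_add_le_rpow_neg hn0 (by linarith) (by linarith)
  have : 0 ≤ Gamma (b + 1 + n) / Gamma (a + b + 1 + n) :=
    div_nonneg (Gamma_nonneg_of_nonneg (by linarith)) (Gamma_nonneg_of_nonneg (by linarith))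
  rw [jacobiSqMoment_zero (by linarith) hb hn]
  calc _ ≤ 3 / 2 * Gamma (a + 1) * (a + 1)⁻¹ * Gamma (a + 1) * n ^ (-a) * n ^ (-a) := by
        gcongr
    _ = _ := by
      rw [show -(2 * a) = -a + -a by ring, rpow_add hn0]
      ring

lemma jacobiSqMoment_le_Gamma_sq {a b v : ℝ} {n : ℕ} (ha : 2 ≤ a) (hb : -1 < b)
    (hn : (a + b + 1) ^ 2 ≤ n) (hv : 0 ≤ v) (hva : v + 1 ≤ a) :
    jacobiSqMoment a b n v ≤ exp 8 * exp (2 * v) * Gamma (a + 1) ^ 2 *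
      (a + 1) ^ (-(2 * v) - 1) * (n : ℝ) ^ (2 * v - 2 * a) := by
  have hn0 : (0 : ℝ) < n := by nlinarith
  have ha1 : 0 < a + 1 := by linarith
  calc _ ≤ _ := jacobiSqMoment_le_of_sq_le ha hb hn hv hva
    _ ≤ exp 8 / 8 * exp (2 * v) * n ^ (2 * v) * (a + 1) ^ (-(2 * v)) *
        (3 / 2 * Gamma (a + 1) ^ 2 * (a + 1)⁻¹ * n ^ (-(2 * a))) := by
      gcongr
      exact jacobiSqMoment_zero_le ha hb (by exact_mod_cast hn0)
    _ = 3 / 16 * (exp 8 * exp (2 * v) * Gamma (a + 1) ^ 2 *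
        (a + 1) ^ (-(2 * v) - 1) * n ^ (2 * v - 2 * a)) := by
      rw [rpow_sub_one ha1.ne', sub_eq_add_neg (2 * v), rpow_add hn0]
      ring
    _ ≤ _ := mul_le_of_le_one_left (by positivity) (by norm_num)

lemma sum_choose_mul_Gamma_div_Gamma_mul_pow {a b : ℝ} {n : ℕ} (ha : -1 < a)
    (hab : 0 < a + b + n + 1) (t : ℝ) :
    ∑ j ∈ Finset.range (n + 1), (n.choose j : ℝ) * (Gamma (a + b + n + j + 1) /
      Gamma (a + j + 1)) * ((1 - 2 * t - 1) / 2) ^ j =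
    Gamma (a + b + n + 1) / Gamma (a + 1) * (normalizedJacobi a b n).eval t := by
  have := Gamma_pos_of_pos (by linarith : 0 < a + 1)
  have := Gamma_pos_of_pos hab
  rw [eval_normalizedJacobi, Finset.mul_sum]
  refine Finset.sum_congr rfl fun j _ => ?_
  rw [coeff_normalizedJacobi_eq_Gamma ha (by linarith), show (1 - 2 * t - 1) / 2 = -1 * t by ring,
    mul_pow, show a + b + 1 + n + j = a + b + n + j + 1 by ring,
    show a + b + 1 + n = a + b + n + 1 by ring, show a + 1 + j = a + j + 1 by ring]
  field_simp

lemma jacobiP_one {a b : ℝ} {n : ℕ} (ha : -1 < a) (hab : 0 < a + b + n + 1) :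
    jacobiP a b n 1 = √((2 * n + a + b + 1) / 2 ^ (a + b + 1) *
      (Gamma (n + a + b + 1) * n.factorial / (Gamma (n + a + 1) * Gamma (n + b + 1)))) *
        (Gamma (a + n + 1) / (n.factorial * Gamma (a + 1))) := by
  have := Gamma_pos_of_pos hab
  have hsum := sum_choose_mul_Gamma_div_Gamma_mul_pow ha hab 0
  rw [← coeff_zero_eq_eval_zero, coeff_zero_normalizedJacobi, mul_zero, sub_zero, mul_one] at hsum
  rw [jacobiP, hsum, mul_assoc]
  field_simp

lemma jacobiP_one_sub_two_mul {a b : ℝ} {n : ℕ} (ha : -1 < a) (hab : 0 < a + b + n + 1) (t : ℝ) :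
    jacobiP a b n (1 - 2 * t) = jacobiP a b n 1 * (normalizedJacobi a b n).eval t := by
  have := Gamma_pos_of_pos hab
  rw [jacobiP_one ha hab, jacobiP, sum_choose_mul_Gamma_div_Gamma_mul_pow ha hab]
  field_simp

lemma sq_jacobiP_one {a b : ℝ} {n : ℕ} (ha : -1 < a) (hb : -1 < b) (hab : 0 < a + b + n + 1) :
    jacobiP a b n 1 ^ 2 = (2 * n + a + b + 1) / 2 ^ (a + b + 1) * (Gamma (n + a + b + 1) *
      Gamma (n + a + 1) / (Gamma (n + b + 1) * n.factorial * Gamma (a + 1) ^ 2)) := by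
  have : (0 : ℝ) ≤ n := n.cast_nonneg
  have := Gamma_pos_of_pos (by linarith : 0 < n + a + b + 1)
  have := Gamma_pos_of_pos (by linarith : 0 < n + a + 1)
  have := Gamma_pos_of_pos (by linarith : 0 < n + b + 1)
  have hnorm : 0 ≤ (2 * n + a + b + 1) / 2 ^ (a + b + 1) *
      (Gamma (n + a + b + 1) * n.factorial / (Gamma (n + a + 1) * Gamma (n + b + 1))) :=
    mul_nonneg (div_nonneg (by linarith) (by positivity)) (by positivity)
  rw [jacobiP_one ha hab, mul_pow, sq_sqrt hnorm, show a + n + 1 = n + a + 1 by ring]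
  field_simp

lemma jacobiP_one_ne_zero {a b : ℝ} {n : ℕ} (ha : -1 < a) (hb : -1 < b)
    (hab : 0 < a + b + n + 1) : jacobiP a b n 1 ≠ 0 := by
  have : (0 : ℝ) ≤ n := n.cast_nonneg
  have := Gamma_pos_of_pos (by linarith : 0 < n + a + b + 1)
  have := Gamma_pos_of_pos (by linarith : 0 < n + a + 1)
  have := Gamma_pos_of_pos (by linarith : 0 < n + b + 1)
  have := Gamma_pos_of_pos (by linarith : 0 < a + 1)
  refine (pow_ne_zero_iff two_ne_zero).mp (ne_of_gt ?_)
  rw [sq_jacobiP_one ha hb hab]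
  exact mul_pos (div_pos (by linarith) (by positivity)) (by positivity)

lemma integral_sq_jacobiP_div_le {a b v : ℝ} {n : ℕ} (ha : -1 < a) (hb : -1 < b)
    (hab : 0 < a + b + n + 1) (hva : v < a) :
    ∫ x in (-1 : ℝ)..1, (jacobiP a b n x / jacobiP a b n 1) ^ 2 *
      (1 - x) ^ (a - 1 - v) * (1 + x) ^ (b + 1) ≤
    2 ^ (a - v + b + 1) * jacobiSqMoment a b n v := by
  have hsubst := intervalIntegral.mul_integral_comp_sub_mul (a := 0) (b := 1)
    (f := fun x : ℝ => (jacobiP a b n x / jacobiP a b n 1) ^ 2 *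
      (1 - x) ^ (a - 1 - v) * (1 + x) ^ (b + 1)) 2 1
  rw [mul_zero, sub_zero, mul_one, show (1 : ℝ) - 2 = -1 by norm_num] at hsubst
  have hscale : ∫ t in (0 : ℝ)..1, (jacobiP a b n (1 - 2 * t) / jacobiP a b n 1) ^ 2 *
      (1 - (1 - 2 * t)) ^ (a - 1 - v) * (1 + (1 - 2 * t)) ^ (b + 1) =
      ∫ t in (0 : ℝ)..1, 2 ^ (a - v + b) * ((normalizedJacobi a b n).eval t ^ 2 *
        (t ^ (a - 1 - v) * (1 - t) ^ (b + 1))) := by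
    refine intervalIntegral.integral_congr fun t ht => ?_
    rw [uIcc_of_le zero_le_one] at ht
    rw [jacobiP_one_sub_two_mul ha hab, mul_div_cancel_left₀ _ (jacobiP_one_ne_zero ha hb hab),
      show 1 - (1 - 2 * t) = 2 * t by ring, show 1 + (1 - 2 * t) = 2 * (1 - t) by ring,
      mul_rpow zero_le_two ht.1, mul_rpow zero_le_two (sub_nonneg.mpr ht.2),
      show a - v + b = (a - 1 - v) + (b + 1) by ring, rpow_add two_pos (a - 1 - v)]
    ring
  have hmono : ∫ t in (0 : ℝ)..1, (normalizedJacobi a b n).eval t ^ 2 *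
      (t ^ (a - 1 - v) * (1 - t) ^ (b + 1)) ≤ jacobiSqMoment a b n v := by
    refine intervalIntegral.integral_mono_on_of_le_Ioo zero_le_one ?_
      (intervalIntegrable_normalizedJacobi_sq_mul n hb hva) fun t ht => ?_
    · simpa [sq] using intervalIntegrable_eval_mul_rpow_mul_one_sub_rpow
        (normalizedJacobi a b n * normalizedJacobi a b n)
        (by linarith : -1 < a - 1 - v) (by linarith : -1 < b + 1)
    · have := rpow_nonneg ht.1.le (a - 1 - v)
      gcongr _ * (_ * ?_)
      exact rpow_le_rpow_of_exponent_ge (sub_pos.mpr ht.2) (by linarith [ht.1]) (by linarith)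
  rw [← hsubst, hscale, intervalIntegral.integral_const_mul, ← mul_assoc,
    rpow_add_one two_ne_zero, mul_comm 2]
  gcongr

lemma jacobiK_one_nonneg (a b : ℝ) (m : ℕ) : 0 ≤ jacobiK a b m 1 :=
  Finset.sum_nonneg fun _ _ => mul_self_nonneg _

lemma jacobiK_one {a b : ℝ} (ha : -1 < a) (hb : 0 < b) (m : ℕ) :
    jacobiK a b m 1 = 1 / 2 ^ (a + b + 1) / (Gamma (a + 1) * Gamma (a + 2)) *
      (m * (m + b) * (Gamma (m + a + b + 1) * Gamma (m + a + 1)) /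
        (Gamma (m + b + 1) * m.factorial)) := by
  have ha1 : 0 < a + 1 := by linarith
  have := Gamma_pos_of_pos ha1
  induction m with
  | zero => simp [jacobiK]
  | succ m ih =>
    have : (0 : ℝ) ≤ m := m.cast_nonneg
    have hmab : 0 < m + a + b + 1 := by linarith
    have hma : 0 < m + a + 1 := by linarith
    have hmb : 0 < m + b + 1 := by linarith
    have := Gamma_pos_of_pos hmab
    have := Gamma_pos_of_pos hma
    have := Gamma_pos_of_pos hmb
    rw [jacobiK, Finset.sum_range_succ, ← jacobiK, ← sq, ih,
      sq_jacobiP_one ha (by linarith) (by linarith), Nat.factorial_succ]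
    push_cast
    rw [show m + 1 + a + b + 1 = m + a + b + 1 + 1 by ring, Gamma_add_one hmab.ne',
      show m + 1 + a + 1 = m + a + 1 + 1 by ring, Gamma_add_one hma.ne',
      show m + 1 + b + 1 = m + b + 1 + 1 by ring, Gamma_add_one hmb.ne',
      show a + 2 = a + 1 + 1 by ring, Gamma_add_one ha1.ne']
    field_simp
    ring

lemma jacobiK_one_le {a b : ℝ} {m : ℕ} (ha : -1 < a) (hb : 0 < b) (hm : 0 < m)
    (habm : (a + b) ^ 2 ≤ m) :
    jacobiK a b m 1 ≤ exp 8 / 2 ^ (a + b + 1) / (Gamma (a + 1) * Gamma (a + 2)) *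
      (m : ℝ) ^ (2 * a + 2) := by
  have hm1 : (1 : ℝ) ≤ m := by exact_mod_cast hm
  have hm0 : (0 : ℝ) < m := by linarith
  have := Gamma_pos_of_pos (by linarith : 0 < a + 1)
  have := Gamma_pos_of_pos (by linarith : 0 < a + 2)
  have hΓ {y : ℝ} (hy : 0 ≤ y) (hyb : y ≤ b) :
      Gamma (m + y + (a + 1)) ≤ exp 4 * m ^ (a + 1) * Gamma (m + y) := by
    have := Gamma_pos_of_pos (by linarith : 0 < m + y)
    refine (Gamma_add_le_rpow_mul_Gamma (by linarith) (by linarith)).trans ?_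
    gcongr
    rw [add_assoc]
    refine (add_rpow_le_exp_mul_rpow hm0 (by linarith) (by linarith)).trans ?_
    gcongr
    rw [div_le_iff₀ hm0]
    nlinarith [sq_nonneg (a + b - 1)]
  have hΓb := hΓ hb.le le_rfl
  have hΓ0 := hΓ le_rfl hb.le
  have := Gamma_pos_of_pos hm0
  have := Gamma_pos_of_pos (by linarith : 0 < m + b)
  have := Gamma_pos_of_pos (by linarith : 0 < m + b + (a + 1))
  have := Gamma_pos_of_pos (by linarith : 0 < m + (a + 1))
  rw [add_zero] at hΓ0
  rw [jacobiK_one ha hb, show m + a + b + 1 = m + b + (a + 1) by ring, add_assoc (m : ℝ) a,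
    Gamma_add_one (by linarith : m + b ≠ 0), ← Gamma_nat_eq_factorial, Gamma_add_one hm0.ne']
  calc _ ≤ 1 / 2 ^ (a + b + 1) / (Gamma (a + 1) * Gamma (a + 2)) * (m * (m + b) *
        ((exp 4 * m ^ (a + 1) * Gamma (m + b)) * (exp 4 * m ^ (a + 1) * Gamma m)) /
          ((m + b) * Gamma (m + b) * (m * Gamma m))) := by gcongr
    _ = exp 4 * exp 4 / 2 ^ (a + b + 1) / (Gamma (a + 1) * Gamma (a + 2)) *
        (m ^ (a + 1) * m ^ (a + 1)) := by field_simp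
    _ = _ := by
      rw [← exp_add, ← rpow_add hm0]
      ring_nf

end JacobiPolynomial

theorem jacobiK_mul_sq_integral_bound_general {α β r s : ℝ} {n m : ℕ} (hα : -1 < α) (hβ : 0 < β)
    (hs : -α ≤ s) (hsr : s ≤ r) (hαr : 1 ≤ α + r) (hn : (α + β + r + 1) ^ 2 ≤ n) (hm0 : 0 < m)
    (hm : (α + β) ^ 2 ≤ m) :
    jacobiK α β m 1 * ∫ x in (-1 : ℝ)..1,
        (jacobiP (α + r + 1) (β - 1) n x / jacobiP (α + r + 1) (β - 1) n 1) ^ 2 *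
          (1 - x) ^ (s + α) * (1 + x) ^ β ≤
      exp 16 * exp (2 * r - 2 * s) * 2 ^ s * ((m : ℝ) / n) ^ (2 * α + 2 * s + 2) *
        (m : ℝ) ^ (-(2 * s)) * (Gamma (α + r + 2) ^ 2 / (Gamma (α + 1) * Gamma (α + 2))) *
        (α + r + 2) ^ (2 * s - 2 * r - 1) := by
  have hm0' : (0 : ℝ) < m := by exact_mod_cast hm0
  have hn0 : (0 : ℝ) < n := by nlinarith
  have hmoment := jacobiSqMoment_le_Gamma_sq (v := r - s) (by linarith : 2 ≤ α + r + 1)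
    (by linarith : -1 < β - 1) (hn.trans' (by ring_nf; rfl)) (by linarith) (by linarith)
  have hint := integral_sq_jacobiP_div_le (n := n) (v := r - s) (by linarith : -1 < α + r + 1)
    (by linarith : -1 < β - 1) (by linarith) (by linarith)
  rw [show α + r + 1 - 1 - (r - s) = s + α by ring, sub_add_cancel,
    show α + r + 1 - (r - s) + (β - 1) + 1 = s + (α + β + 1) by ring, rpow_add two_pos] at hint
  rw [show 2 * (r - s) - 2 * (α + r + 1) = -(2 * α + 2 * s + 2) by ring,
    show -(2 * (r - s)) - 1 = 2 * s - 2 * r - 1 by ring, show α + r + 1 + 1 = α + r + 2 by ring,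
    mul_sub] at hmoment
  have := Gamma_pos_of_pos (by linarith : 0 < α + 1)
  have := Gamma_pos_of_pos (by linarith : 0 < α + 2)
  have : 0 < α + r + 2 := by linarith
  have hpow := div_rpow_add_mul_rpow_neg hm0' hn0 (2 * α + 2) (2 * s)
  rw [show 2 * α + 2 + 2 * s = 2 * α + 2 * s + 2 by ring] at hpow
  calc
    _ ≤ exp 8 / 2 ^ (α + β + 1) / (Gamma (α + 1) * Gamma (α + 2)) * (m : ℝ) ^ (2 * α + 2) *
        (2 ^ s * 2 ^ (α + β + 1) * (exp 8 * exp (2 * r - 2 * s) * Gamma (α + r + 2) ^ 2 *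
          (α + r + 2) ^ (2 * s - 2 * r - 1) * n ^ (-(2 * α + 2 * s + 2)))) := by
      refine (mul_le_mul_of_nonneg_left (hint.trans ?_) (jacobiK_one_nonneg ..)).trans
        (mul_le_mul_of_nonneg_right (jacobiK_one_le hα hβ hm0 hm) (by positivity))
      gcongr
    _ = exp (8 + 8) * exp (2 * r - 2 * s) * 2 ^ s *
        ((m : ℝ) ^ (2 * α + 2) * n ^ (-(2 * α + 2 * s + 2))) *
        (Gamma (α + r + 2) ^ 2 / (Gamma (α + 1) * Gamma (α + 2))) *
        (α + r + 2) ^ (2 * s - 2 * r - 1) := by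
      rw [exp_add]
      field_simp
    _ = _ := by
      rw [← hpow, show (8 : ℝ) + 8 = 16 by norm_num]
      ring

/-- Bound for `K_m^{(α,β)}(1)` times the weighted `L²` integral of the normalized
Jacobi polynomial `p_n^{(α+r+1,β−1)}`. -/
theorem jacobiK_mul_sq_integral_bound :
    ∃ c : ℝ, 0 < c ∧
      ∀ (α β r s : ℝ) (n m : ℕ), 2 ≤ β → β ≤ α → -1 < s → s ≤ r →
        (2 * α + r + 1) ^ 2 ≤ (n : ℝ) → (α + β) ^ 2 ≤ (m : ℝ) →
        jacobiK α β m 1 *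
            ∫ x in (-1 : ℝ)..1,
              (jacobiP (α + r + 1) (β - 1) n x / jacobiP (α + r + 1) (β - 1) n 1) ^ 2 *
                (1 - x) ^ (s + α) * (1 + x) ^ β ≤
          c * Real.exp (2 * r - 2 * s) * 2 ^ s * ((m : ℝ) / n) ^ (2 * α + 2 * s + 2) *
            (m : ℝ) ^ (-(2 * s)) *
            (Real.Gamma (α + r + 2) ^ 2 / (Real.Gamma (α + 1) * Real.Gamma (α + 2))) *
            (α + r + 2) ^ (2 * s - 2 * r - 2/3) := by
  refine ⟨exp 16, exp_pos 16, fun α β r s n m hβ hαβ hs hsr hn hm => ?_⟩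
  have hm0 : 0 < m := by
    rw [← Nat.cast_pos (α := ℝ)]
    nlinarith
  have hn' : (α + β + r + 1) ^ 2 ≤ n := hn.trans' (by gcongr <;> linarith)
  have := Gamma_pos_of_pos (by linarith : 0 < α + 1)
  have := Gamma_pos_of_pos (by linarith : 0 < α + 2)
  refine (jacobiK_mul_sq_integral_bound_general (by linarith) (by linarith) (by linarith) hsr
    (by linarith) hn' hm0 hm).trans ?_
  gcongr
  · linarith
  · norm_num

end
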